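/- Let G be the complete directed graph on n ≥ 2 nodes (all edges present, including self-loops) with unitary travel times, let π > 0 be a probability vector, and set P = 𝟙_n π^T. Then π^T P = π^T, P𝟙_n = 𝟙_n, and the first return probabilities satisfy F_k(i,i) = π_i (1 − π_i)^{k−1} for every state i and every k ∈ ℤ_{>0} (i.e., T_{ii} is geometric with parameter π_i); consequently J(P) = −Σ_{i=1}^n ( π_i log π_i + (1 − π_i) log(1 − π_i) ), so P = 𝟙_n π^T attains the maximum of the return time entropy over Markov chains with stationary distribution π on the complete graph. -/

import Mathlib

open scoped BigOperators
open Real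

/-- First hitting time probabilities for unitary travel times:
`F_1 = P` and `F_k(i,j) = Σ_{h≠j} p_{ih} F_{k−1}(h,j)` for `k ≥ 2`. -/
def IsHittingProbUnit {n : ℕ} (P : Matrix (Fin n) (Fin n) ℝ)
    (F : ℕ → Fin n → Fin n → ℝ) : Prop :=
  (∀ i j, F 1 i j = P i j) ∧
    ∀ k : ℕ, 2 ≤ k → ∀ i j,
      F k i j = ∑ h : Fin n, if h = j then 0 else P i h * F (k - 1) h j

/-!
For a target state `j`, let `T` be the transition matrix with column `j` set to zero, so that
`S k = T ^ k *ᵥ 1` lists the probabilities of not having hit `j` in the first `k` steps and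
`F_{k+1}(·,j) = S k - S (k + 1)`. Multiplying by the stationary vector `μ` telescopes:
`μ j * S k j = μ ⬝ᵥ S k - μ ⬝ᵥ S (k + 1)`, hence the mean return time to `j` is at most `1 / μ j`.
Comparing with the geometric law of the same parameter, whose logarithm is affine in `k`, Gibbs'
inequality bounds the return time entropy by that of the geometric law. For the chain with all rows
equal to `μ`, `S k` is the constant `(1 - μ j) ^ k`, so the return times are exactly geometric.
-/

section Entropy

lemma negMulLog_le_neg_mul_log_add_sub {x y : ℝ} (hx : 0 ≤ x) (hy : 0 < y) :
    negMulLog x ≤ -(x * log y) + (y - x) :=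
  calc negMulLog x = negMulLog (y * (x / y)) := by rw [mul_div_cancel₀ x hy.ne']
    _ = x / y * negMulLog y + y * negMulLog (x / y) := negMulLog_mul _ _
    _ ≤ x / y * negMulLog y + y * (1 - x / y) := by
      gcongr
      exact negMulLog_le_one_sub_self (div_nonneg hx hy.le)
    _ = -(x * log y) + (y - x) := by
      rw [negMulLog]
      field_simp

lemma tsum_negMulLog_le_crossEntropy {α : Type*} {f g : α → ℝ} {C : ℝ}
    (hf : ∀ a, 0 ≤ f a) (hg : ∀ a, 0 < g a) (hf_sum : HasSum f 1) (hg_sum : HasSum g 1)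
    (hC : HasSum (fun a => -(f a * log (g a))) C) :
    ∑' a, negMulLog (f a) ≤ C := by
  have gibbs a : negMulLog (f a) ≤ -(f a * log (g a)) + (g a - f a) :=
    negMulLog_le_neg_mul_log_add_sub (hf a) (hg a)
  have bound_sum : HasSum (fun a => -(f a * log (g a)) + (g a - f a)) C := by
    simpa only [sub_self, add_zero] using hC.add (hg_sum.sub hf_sum)
  have entropy_summable : Summable fun a => negMulLog (f a) :=
    .of_nonneg_of_le
      (fun a => negMulLog_nonneg (hf a) (le_hasSum hf_sum a fun b _ => hf b)) gibbs
      bound_sum.summable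
  exact hasSum_le gibbs entropy_summable.hasSum bound_sum

variable {p : ℝ}

lemma hasSum_geometricLaw (hp0 : 0 < p) (hp1 : p < 1) :
    HasSum (fun k : ℕ => p * (1 - p) ^ k) 1 := by
  have h := (hasSum_geometric_of_lt_one (sub_nonneg.2 hp1.le) (sub_lt_self 1 hp0)).mul_left p
  rwa [sub_sub_cancel, mul_inv_cancel₀ hp0.ne'] at h

lemma hasSum_natCast_mul_geometricLaw (hp0 : 0 < p) (hp1 : p < 1) :
    HasSum (fun k : ℕ => k * (p * (1 - p) ^ k)) (1 / p - 1) := by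
  have hr : ‖1 - p‖ < 1 := by
    rw [norm_of_nonneg (sub_nonneg.2 hp1.le)]
    exact sub_lt_self 1 hp0
  convert! (hasSum_coe_mul_geometric_of_norm_lt_one hr).mul_left p using 1
  · funext k
    ring
  · rw [sub_sub_cancel]
    field_simp

lemma hasSum_crossEntropy_geometricLaw (hp0 : 0 < p) (hp1 : p < 1) {f : ℕ → ℝ} {s m : ℝ}
    (hf : HasSum f s) (hm : HasSum (fun k => k * f k) m) :
    HasSum (fun k => -(f k * log (p * (1 - p) ^ k))) (-(s * log p + m * log (1 - p))) := by
  have hr : 0 < 1 - p := sub_pos.2 hp1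
  convert! ((hf.mul_right (log p)).add (hm.mul_right (log (1 - p)))).neg using 2 with k
  rw [log_mul hp0.ne' (pow_pos hr k).ne', log_pow]
  ring

lemma binEntropy_div_self (hp : p ≠ 0) :
    binEntropy p / p = -(log p + (1 / p - 1) * log (1 - p)) := by
  rw [binEntropy, log_inv, log_inv]
  field_simp
  ring

lemma tsum_negMulLog_geometricLaw (hp0 : 0 < p) (hp1 : p < 1) :
    ∑' k : ℕ, negMulLog (p * (1 - p) ^ k) = binEntropy p / p := by
  have h := hasSum_crossEntropy_geometricLaw hp0 hp1 (hasSum_geometricLaw hp0 hp1)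
    (hasSum_natCast_mul_geometricLaw hp0 hp1)
  rw [one_mul, ← binEntropy_div_self hp0.ne'] at h
  simpa only [negMulLog, neg_mul] using h.tsum_eq

theorem tsum_negMulLog_le_binEntropy_div {f : ℕ → ℝ} {m : ℝ} (hp0 : 0 < p) (hp1 : p < 1)
    (hf : ∀ k, 0 ≤ f k) (hf_sum : HasSum f 1) (hm : HasSum (fun k => k * f k) m)
    (hmp : m ≤ 1 / p - 1) :
    ∑' k, negMulLog (f k) ≤ binEntropy p / p := by
  have hr : 0 < 1 - p := sub_pos.2 hp1
  have log_nonpos : log (1 - p) ≤ 0 := log_nonpos hr.le (sub_le_self 1 hp0.le)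
  calc ∑' k, negMulLog (f k) ≤ -(1 * log p + m * log (1 - p)) :=
        tsum_negMulLog_le_crossEntropy hf (fun k => mul_pos hp0 (pow_pos hr k)) hf_sum
          (hasSum_geometricLaw hp0 hp1) (hasSum_crossEntropy_geometricLaw hp0 hp1 hf_sum hm)
    _ ≤ -(log p + (1 / p - 1) * log (1 - p)) := by
        rw [one_mul]
        exact neg_le_neg (add_le_add_right (mul_le_mul_of_nonpos_right hmp log_nonpos) _)
    _ = binEntropy p / p := (binEntropy_div_self hp0.ne').symm

end Entropy

section TailSums

lemma sum_range_natCast_mul_sub_succ {R : Type*} [Ring R] (G : ℕ → R) (K : ℕ) :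
    ∑ k ∈ Finset.range K, k * (G k - G (k + 1)) =
      ∑ k ∈ Finset.range K, G (k + 1) - K * G K := by
  induction K with
  | zero => simp
  | succ K ih =>
    rw [Finset.sum_range_succ, ih, Finset.sum_range_succ, Nat.cast_succ]
    noncomm_ring

theorem tsum_negMulLog_sub_succ_le_binEntropy_div {p : ℝ} (hp0 : 0 < p) (hp1 : p < 1)
    {G : ℕ → ℝ} (hG0 : G 0 = 1) (hG : ∀ k, 0 ≤ G k) (hG_anti : Antitone G)
    (hG_sum : ∀ K, ∑ k ∈ Finset.range K, G k ≤ 1 / p) :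
    ∑' k, negMulLog (G k - G (k + 1)) ≤ binEntropy p / p := by
  have diff_nonneg k : 0 ≤ G k - G (k + 1) := sub_nonneg.2 (hG_anti k.le_succ)
  have diff_sum : HasSum (fun k => G k - G (k + 1)) 1 := by
    rw [hasSum_iff_tendsto_nat_of_nonneg diff_nonneg]
    simpa only [Finset.sum_range_sub', hG0, sub_zero] using
      (summable_of_sum_range_le hG hG_sum).tendsto_atTop_zero.const_sub 1
  have mul_diff_nonneg (k : ℕ) : 0 ≤ k * (G k - G (k + 1)) :=
    mul_nonneg k.cast_nonneg (diff_nonneg k)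
  have mean_le K : ∑ k ∈ Finset.range K, k * (G k - G (k + 1)) ≤ 1 / p - 1 := by
    have tail_le := hG_sum (K + 1)
    rw [Finset.sum_range_succ', hG0] at tail_le
    rw [sum_range_natCast_mul_sub_succ]
    linarith [mul_nonneg K.cast_nonneg (hG K)]
  exact tsum_negMulLog_le_binEntropy_div hp0 hp1 diff_nonneg diff_sum
    (summable_of_sum_range_le mul_diff_nonneg mean_le).hasSum
    (Real.tsum_le_of_sum_range_le mul_diff_nonneg mean_le)

end TailSums

section Survival

open Matrix

variable {ι R : Type*}

lemma replicateRow_mulVec_one [Fintype ι] [NonAssocSemiring R] {μ : ι → R} (hμ : ∑ i, μ i = 1) :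
    replicateRow ι μ *ᵥ 1 = 1 := by
  ext i
  simpa only [mulVec, dotProduct, replicateRow_apply, Pi.one_apply, mul_one] using hμ

variable [DecidableEq ι]

/-- The taboo matrix of the target state `j`: the transition matrix `Q` with its column `j` erased,
so that its powers only count the paths avoiding `j` after time `0`. -/
def taboo [Zero R] (Q : Matrix ι ι R) (j : ι) : Matrix ι ι R :=
  Q.updateCol j 0

variable [Fintype ι]

/-- The survival function of the first hitting time of `j`: `survival Q j k i` is the probability
that the chain `Q` started at `i` does not visit `j` at any of the times `1, …, k`. -/
def survival [Semiring R] (Q : Matrix ι ι R) (j : ι) (k : ℕ) : ι → R :=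
  taboo Q j ^ k *ᵥ 1

lemma survival_zero [Semiring R] (Q : Matrix ι ι R) (j : ι) : survival Q j 0 = 1 := by
  rw [survival, pow_zero, one_mulVec]

lemma survival_succ [Semiring R] (Q : Matrix ι ι R) (j : ι) (k : ℕ) :
    survival Q j (k + 1) = taboo Q j *ᵥ survival Q j k := by
  rw [survival, survival, pow_succ', mulVec_mulVec]

section Ring

variable [Ring R] {Q : Matrix ι ι R}

lemma taboo_mulVec (Q : Matrix ι ι R) (j : ι) (v : ι → R) :
    taboo Q j *ᵥ v = Q *ᵥ (v - Pi.single j (v j)) := by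
  ext i
  refine Finset.sum_congr rfl fun h _ => ?_
  obtain rfl | hne := eq_or_ne h j <;> simp [taboo, *]

lemma taboo_mulVec_one (hQ : Q *ᵥ 1 = 1) (j : ι) : taboo Q j *ᵥ 1 = 1 - Q.col j := by
  rw [taboo_mulVec, mulVec_sub, hQ, Pi.one_apply, mulVec_single_one]

lemma taboo_pow_mulVec_col (hQ : Q *ᵥ 1 = 1) (j : ι) (k : ℕ) :
    taboo Q j ^ k *ᵥ Q.col j = survival Q j k - survival Q j (k + 1) := by
  rw [survival, survival, pow_succ, ← mulVec_mulVec, taboo_mulVec_one hQ, mulVec_sub,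
    sub_sub_cancel]

lemma dotProduct_taboo_mulVec (μ : ι → R) (Q : Matrix ι ι R) (j : ι) (v : ι → R) :
    μ ⬝ᵥ taboo Q j *ᵥ v = (μ ᵥ* Q) ⬝ᵥ v - (μ ᵥ* Q) j * v j := by
  rw [taboo_mulVec, dotProduct_mulVec, dotProduct_sub, dotProduct_single]

lemma stationary_mul_sum_survival {μ : ι → R} (hμQ : μ ᵥ* Q = μ) (j : ι) (K : ℕ) :
    μ j * ∑ k ∈ Finset.range K, survival Q j k j = μ ⬝ᵥ 1 - μ ⬝ᵥ survival Q j K := by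
  have telescope k : μ j * survival Q j k j = μ ⬝ᵥ survival Q j k - μ ⬝ᵥ survival Q j (k + 1) := by
    rw [survival_succ, dotProduct_taboo_mulVec, hμQ, sub_sub_cancel]
  simp only [Finset.mul_sum, telescope, Finset.sum_range_sub', survival_zero]

end Ring

lemma survival_replicateRow [CommRing R] {μ : ι → R} (hμ : ∑ i, μ i = 1) (j : ι) (k : ℕ) :
    survival (replicateRow ι μ) j k = (1 - μ j) ^ k • 1 := by
  have col_eq : (replicateRow ι μ).col j = μ j • 1 := by
    ext i
    simp
  induction k with
  | zero => rw [survival_zero, pow_zero, one_smul]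
  | succ k ih =>
    rw [survival_succ, ih, mulVec_smul, taboo_mulVec_one (replicateRow_mulVec_one hμ), col_eq,
      pow_succ, mul_smul, sub_smul, one_smul]

section Order

variable [Ring R] [PartialOrder R] [IsOrderedRing R] {Q : Matrix ι ι R}

lemma taboo_pow_mulVec_nonneg (hQ : ∀ i j, 0 ≤ Q i j) (j : ι) (k : ℕ) {v : ι → R} (hv : 0 ≤ v) :
    0 ≤ taboo Q j ^ k *ᵥ v := by
  have taboo_nonneg i h : 0 ≤ taboo Q j i h := by
    rw [taboo, updateCol_apply]
    split_ifs
    exacts [le_rfl, hQ i h]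
  exact fun i => dotProduct_nonneg_of_nonneg (pow_apply_nonneg taboo_nonneg k i) hv

lemma survival_nonneg (hQ : ∀ i j, 0 ≤ Q i j) (j : ι) (k : ℕ) : 0 ≤ survival Q j k :=
  taboo_pow_mulVec_nonneg hQ j k zero_le_one

lemma antitone_survival (hQ : Q ∈ rowStochastic R ι) (j : ι) : Antitone (survival Q j) :=
  antitone_nat_of_succ_le fun k => sub_nonneg.1 <|
    taboo_pow_mulVec_col hQ.2 j k ▸ taboo_pow_mulVec_nonneg hQ.1 j k fun i => hQ.1 i j

end Order

lemma sum_survival_le_one_div {Q : Matrix ι ι ℝ} (hQ : ∀ i j, 0 ≤ Q i j) {μ : ι → ℝ}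
    (hμ : μ ∈ stdSimplex ℝ ι) (hμQ : μ ᵥ* Q = μ) {j : ι} (hj : 0 < μ j) (K : ℕ) :
    ∑ k ∈ Finset.range K, survival Q j k j ≤ 1 / μ j := by
  rw [le_div_iff₀' hj, stationary_mul_sum_survival hμQ, dotProduct_one, hμ.2]
  exact sub_le_self 1 (dotProduct_nonneg_of_nonneg hμ.1 (survival_nonneg hQ j K))

end Survival

section ReturnTime

open Matrix

/-- The return time entropy `H(T_ii)` of the state `i`, in nats, where `F k i i` is the probability
that the first return to `i` takes `k ≥ 1` steps. -/
noncomputable def returnTimeEntropy {ι : Type*} (F : ℕ → ι → ι → ℝ) (i : ι) : ℝ :=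
  ∑' k : ℕ, negMulLog (F (k + 1) i i)

variable {n : ℕ} {Q : Matrix (Fin n) (Fin n) ℝ} {F : ℕ → Fin n → Fin n → ℝ} {μ : Fin n → ℝ}

lemma IsHittingProbUnit.apply_succ (hF : IsHittingProbUnit Q F) (k : ℕ) (i j : Fin n) :
    F (k + 1) i j = (taboo Q j ^ k *ᵥ Q.col j) i := by
  induction k generalizing i with
  | zero => rw [zero_add, hF.1, pow_zero, one_mulVec, col_apply]
  | succ k ih =>
    rw [hF.2 (k + 1 + 1) (by omega), pow_succ', ← mulVec_mulVec]
    refine Finset.sum_congr rfl fun h _ => ?_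
    simp only [Nat.add_sub_cancel, ih, taboo, updateCol_apply, Pi.zero_apply, ite_mul, zero_mul]

lemma IsHittingProbUnit.apply_succ_eq_survival_sub (hF : IsHittingProbUnit Q F)
    (hQ : Q *ᵥ 1 = 1) (k : ℕ) (i j : Fin n) :
    F (k + 1) i j = survival Q j k i - survival Q j (k + 1) i := by
  rw [hF.apply_succ, taboo_pow_mulVec_col hQ, Pi.sub_apply]

lemma IsHittingProbUnit.returnTimeEntropy_le (hF : IsHittingProbUnit Q F)
    (hQ : Q ∈ rowStochastic ℝ (Fin n)) (hμ : μ ∈ stdSimplex ℝ (Fin n)) (hμQ : μ ᵥ* Q = μ)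
    {j : Fin n} (hj0 : 0 < μ j) (hj1 : μ j < 1) :
    returnTimeEntropy F j ≤ binEntropy (μ j) / μ j := by
  simp only [returnTimeEntropy, hF.apply_succ_eq_survival_sub hQ.2]
  exact tsum_negMulLog_sub_succ_le_binEntropy_div hj0 hj1 (congrFun (survival_zero Q j) j)
    (fun k => survival_nonneg hQ.1 j k j) (fun _ _ h => antitone_survival hQ j h j)
    (sum_survival_le_one_div hQ.1 hμ hμQ hj0)

lemma IsHittingProbUnit.apply_succ_of_replicateRow
    (hF : IsHittingProbUnit (replicateRow (Fin n) μ) F) (hμ : ∑ i, μ i = 1) (k : ℕ) (i j : Fin n) :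
    F (k + 1) i j = μ j * (1 - μ j) ^ k := by
  rw [hF.apply_succ_eq_survival_sub (replicateRow_mulVec_one hμ), survival_replicateRow hμ,
    survival_replicateRow hμ, Pi.smul_apply, Pi.smul_apply, Pi.one_apply, smul_eq_mul, smul_eq_mul]
  ring

lemma IsHittingProbUnit.returnTimeEntropy_of_replicateRow
    (hF : IsHittingProbUnit (replicateRow (Fin n) μ) F) (hμ : ∑ i, μ i = 1) {j : Fin n}
    (hj0 : 0 < μ j) (hj1 : μ j < 1) :
    returnTimeEntropy F j = binEntropy (μ j) / μ j := by
  simp only [returnTimeEntropy, hF.apply_succ_of_replicateRow hμ]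
  exact tsum_negMulLog_geometricLaw hj0 hj1

end ReturnTime

lemma lt_one_of_sum_eq_one {ι : Type*} [Fintype ι] [Nontrivial ι] {μ : ι → ℝ}
    (hμ : ∀ i, 0 < μ i) (hμ_sum : ∑ i, μ i = 1) (i : ι) : μ i < 1 := by
  obtain ⟨j, hj⟩ := exists_ne i
  exact hμ_sum ▸ Finset.single_lt_sum hj (Finset.mem_univ i) (Finset.mem_univ j) (hμ j)
    fun k _ _ => (hμ k).le

/-- on the complete directed graph (with self-loops) and unitary
travel times, the chain `P = 𝟙 πᵀ` (i.e. `P i j = π j`) has `π` as stationary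
distribution, is row-stochastic, its first return times are geometric:
`F_k(i,i) = π_i (1−π_i)^{k−1}`, its return time entropy equals
`−Σ_i (π_i log π_i + (1−π_i) log(1−π_i))`, and it maximizes the return time
entropy among all Markov chains on the complete graph with stationary
distribution `π`. -/
theorem complete_graph_optimal_chain {n : ℕ} (hn : 2 ≤ n)
    (pivec : Fin n → ℝ) (hpi : ∀ i, 0 < pivec i) (hpisum : ∑ i, pivec i = 1)
    (P : Matrix (Fin n) (Fin n) ℝ) (hP : ∀ i j, P i j = pivec j)
    (F : ℕ → Fin n → Fin n → ℝ) (hF : IsHittingProbUnit P F) :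
    (∀ j, ∑ i, pivec i * P i j = pivec j) ∧
    (∀ i, ∑ j, P i j = 1) ∧
    (∀ i : Fin n, ∀ k : ℕ, 1 ≤ k → F k i i = pivec i * (1 - pivec i) ^ (k - 1)) ∧
    (∑ i : Fin n, pivec i * ∑' k : ℕ, Real.negMulLog (F (k + 1) i i)) =
      -∑ i : Fin n,
        (pivec i * Real.log (pivec i) + (1 - pivec i) * Real.log (1 - pivec i)) ∧
    (∀ Q : Matrix (Fin n) (Fin n) ℝ, (∀ i j, 0 ≤ Q i j) → (∀ i, ∑ j, Q i j = 1) →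
      (∀ j, ∑ i, pivec i * Q i j = pivec j) →
      ∀ F' : ℕ → Fin n → Fin n → ℝ, IsHittingProbUnit Q F' →
        (∑ i : Fin n, pivec i * ∑' k : ℕ, Real.negMulLog (F' (k + 1) i i)) ≤
          ∑ i : Fin n, pivec i * ∑' k : ℕ, Real.negMulLog (F (k + 1) i i)) := by
  obtain rfl : P = Matrix.replicateRow (Fin n) pivec := Matrix.ext hP
  have : Nontrivial (Fin n) := Fin.nontrivial_iff_two_le.2 hn
  have hlt : ∀ i, pivec i < 1 := lt_one_of_sum_eq_one hpi hpisum
  have entropy_eq i : ∑' k : ℕ, negMulLog (F (k + 1) i i) = binEntropy (pivec i) / pivec i :=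
    hF.returnTimeEntropy_of_replicateRow hpisum (hpi i) (hlt i)
  refine ⟨fun j => ?stationary, fun _ => hpisum, fun i k hk => ?geometric, ?entropy,
    fun Q hQ0 hQ1 hQπ F' hF' => ?optimal⟩
  case stationary =>
    simp only [Matrix.replicateRow_apply, ← Finset.sum_mul, hpisum, one_mul]
  case geometric =>
    rw [← hF.apply_succ_of_replicateRow hpisum, Nat.sub_add_cancel hk]
  case entropy =>
    simp only [entropy_eq, mul_div_cancel₀ _ (hpi _).ne', ← Finset.sum_neg_distrib]
    simp only [binEntropy_eq_negMulLog_add_negMulLog_one_sub, negMulLog, neg_mul, neg_add]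
  case optimal =>
    refine Finset.sum_le_sum fun i _ => mul_le_mul_of_nonneg_left ?_ (hpi i).le
    rw [entropy_eq]
    exact hF'.returnTimeEntropy_le (Matrix.mem_rowStochastic_iff_sum.2 ⟨hQ0, hQ1⟩)
      ⟨fun i => (hpi i).le, hpisum⟩ (funext hQπ) (hpi i) (hlt i)
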